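/- Let k be a field and M a 1-dimensional behavior, i.e., a closed k[z]-submodule M ⊆ (k^N)^{r_0} where z acts by the shift σ(λ_0, λ_1, ...) = (λ_1, λ_2, ...) and k^N has the product topology. Then there exist a natural number r_1, a matrix G(z) ∈ M_{r_0 × r_1}(k[z]), and an exact sequence 0 → M → (k^N)^{r_0} →^{·G(z)} (k^N)^{r_1}; moreover M is isomorphic as a topological k[z]-module to (k^N)^r ⊕ N where r = r_0 − r_1 and N is a finite-dimensional k-module. -/

import Mathlib

/-- The shift operator `σ(λ₀, λ₁, …) = (λ₁, λ₂, …)` on `k^ℕ`, as a `k`-linear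
endomorphism; it makes `k^ℕ` a `k[z]`-module, `z` acting by `σ`. -/
def shiftEnd (k : Type*) [Field k] : Module.End k (ℕ → k) where
  toFun φ := fun n => φ (n + 1)
  map_add' := fun _ _ => rfl
  map_smul' := fun _ _ => rfl


open Polynomial in
lemma shift_pow_apply (k : Type*) [Field k] (t : ℕ) (y : ℕ → k) (n : ℕ) :
    ((shiftEnd k) ^ t) y n = y (n + t) := by
  induction t generalizing n with
  | zero => simp
  | succ t ih =>
    rw [pow_succ', Module.End.mul_apply]
    change ((shiftEnd k) ^ t) y (n + 1) = _
    rw [ih]; congr 1; omega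

open Polynomial in
lemma act_monomial (k : Type*) [Field k] (t : ℕ) (c : k) (y : ℕ → k) (n : ℕ) :
    aeval (shiftEnd k) (monomial t c) y n = c * y (n + t) := by
  rw [aeval_monomial, Module.End.mul_apply, Module.algebraMap_end_apply, Pi.smul_apply,
    shift_pow_apply, smul_eq_mul]

open Polynomial in
lemma act_apply (k : Type*) [Field k] (p : k[X]) (y : ℕ → k) (n : ℕ) :
    aeval (shiftEnd k) p y n = ∑ i ∈ Finset.range (p.natDegree + 1), p.coeff i * y (n + i) := by
  conv_lhs => rw [p.as_sum_range]
  rw [map_sum, LinearMap.sum_apply, Finset.sum_apply]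
  exact Finset.sum_congr rfl fun i _ => act_monomial k i _ y n

open Polynomial in
lemma act_continuous (k : Type*) [Field k] [TopologicalSpace k] [DiscreteTopology k] (p : k[X]) :
    Continuous (fun y : ℕ → k => aeval (shiftEnd k) p y) := by
  refine continuous_pi fun n => ?_
  simp only [act_apply]
  refine continuous_finsetSum _ fun i _ => ?_
  exact (continuous_of_discreteTopology (f := fun x : k => p.coeff i * x)).comp
    (continuous_apply (n + i))

open Polynomial in
lemma act_shift (k : Type*) [Field k] (p : k[X]) (y : ℕ → k) :
    aeval (shiftEnd k) p (fun n => y (n + 1)) = fun n => aeval (shiftEnd k) p y (n + 1) := by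
  funext n
  rw [act_apply, act_apply]
  refine Finset.sum_congr rfl fun i _ => ?_
  congr 2; omega

open Polynomial in
lemma act_inj (k : Type*) [Field k] (p : k[X]) (hp : p ≠ 0) (y : ℕ → k)
    (hy : aeval (shiftEnd k) p y = 0) (h0 : ∀ t < p.natDegree, y t = 0) : y = 0 := by
  funext n
  induction n using Nat.strong_induction_on with
  | _ n ih =>
    by_cases hn : n < p.natDegree
    · exact h0 n hn
    · have h := congrFun hy (n - p.natDegree)
      rw [act_apply, Finset.sum_range_succ, Finset.sum_eq_zero, zero_add,
        Nat.sub_add_cancel (not_lt.mp hn)] at h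
      · exact (mul_eq_zero.mp h).resolve_left (by simpa using hp)
      · intro i hi
        have := Finset.mem_range.mp hi
        rw [ih _ (by omega)]; simp

/-- The pairing of a polynomial vector with a vector of sequences. -/
noncomputable def pairL (k : Type*) [Field k] {r : ℕ} (p : Fin r → Polynomial k) :
    (Fin r → ℕ → k) →ₗ[k] (ℕ → k) :=
  ∑ i, (Polynomial.aeval (shiftEnd k) (p i)) ∘ₗ LinearMap.proj i

lemma pairL_apply (k : Type*) [Field k] {r : ℕ} (p : Fin r → Polynomial k) (w : Fin r → ℕ → k) :
    pairL k p w = ∑ i, Polynomial.aeval (shiftEnd k) (p i) (w i) := by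
  simp [pairL, LinearMap.sum_apply]

lemma pairL_zero (k : Type*) [Field k] {r : ℕ} (w : Fin r → ℕ → k) :
    pairL k (0 : Fin r → Polynomial k) w = 0 := by
  simp [pairL_apply]

lemma pairL_add (k : Type*) [Field k] {r : ℕ} (p q : Fin r → Polynomial k) (w : Fin r → ℕ → k) :
    pairL k (p + q) w = pairL k p w + pairL k q w := by
  simp [pairL_apply, Finset.sum_add_distrib]

lemma pairL_smul (k : Type*) [Field k] {r : ℕ} (c : Polynomial k) (p : Fin r → Polynomial k)
    (w : Fin r → ℕ → k) :
    pairL k (c • p) w = Polynomial.aeval (shiftEnd k) c (pairL k p w) := by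
  simp [pairL_apply, map_sum]

lemma pairL_sum (k : Type*) [Field k] {r : ℕ} {ι : Type*} (s : Finset ι)
    (p : ι → Fin r → Polynomial k) (w : Fin r → ℕ → k) :
    pairL k (∑ i ∈ s, p i) w = ∑ i ∈ s, pairL k (p i) w := by
  classical
  induction s using Finset.induction_on with
  | empty => simp [pairL_zero]
  | insert a s ha ih => rw [Finset.sum_insert ha, Finset.sum_insert ha, pairL_add, ih]

lemma pairL_single (k : Type*) [Field k] {r : ℕ} (i : Fin r) (w : Fin r → ℕ → k) :
    pairL k (Pi.single i 1) w = w i := by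
  rw [pairL_apply, Finset.sum_eq_single i]
  · simp
  · intro j _ hj; simp [Pi.single_eq_of_ne hj]
  · simp

lemma pairL_shift (k : Type*) [Field k] {r : ℕ} (p : Fin r → Polynomial k)
    (w : Fin r → ℕ → k) :
    pairL k p (fun i n => w i (n + 1)) = fun n => pairL k p w (n + 1) := by
  funext n
  simp only [pairL_apply, act_shift, Finset.sum_apply]

lemma pairL_continuous (k : Type*) [Field k] [TopologicalSpace k] [DiscreteTopology k] {r : ℕ}
    (p : Fin r → Polynomial k) : Continuous (fun w => pairL k p w) := by
  simp only [pairL_apply]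
  exact continuous_finsetSum _ fun i _ => (act_continuous k (p i)).comp (continuous_apply i)

/-- The annihilator of a space of trajectories. -/
noncomputable def annih (k : Type*) [Field k] {r : ℕ} (M : Submodule k (Fin r → ℕ → k)) :
    Submodule (Polynomial k) (Fin r → Polynomial k) where
  carrier := {p | ∀ w ∈ M, pairL k p w = 0}
  zero_mem' := fun w _ => pairL_zero k w
  add_mem' := fun {p q} hp hq w hw => by rw [pairL_add, hp w hw, hq w hw, add_zero]
  smul_mem' := fun c p hp w hw => by rw [pairL_smul, hp w hw, map_zero]

lemma exists_trunc (k : Type*) [Field k] [TopologicalSpace k] [DiscreteTopology k]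
    {r : ℕ} (M : Submodule k (Fin r → ℕ → k)) (hc : IsClosed (M : Set (Fin r → ℕ → k)))
    (w : Fin r → ℕ → k) (hw : w ∉ M) :
    ∃ n : ℕ, ∀ m ∈ M, ¬ ∀ i, ∀ t < n, m i t = w i t := by
  by_contra! h
  choose m hm hmw using h
  refine hw (hc.mem_of_tendsto (b := Filter.atTop) (f := m) ?_ (Filter.Eventually.of_forall hm))
  rw [tendsto_pi_nhds]; intro i
  rw [tendsto_pi_nhds]; intro t
  refine tendsto_const_nhds.congr' ?_
  filter_upwards [Filter.eventually_gt_atTop t] with n hn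
  exact (hmw n i t hn).symm

lemma mem_of_annih (k : Type*) [Field k] [TopologicalSpace k] [DiscreteTopology k]
    {r : ℕ} (M : Submodule k (Fin r → ℕ → k)) (hc : IsClosed (M : Set (Fin r → ℕ → k)))
    (hshift : ∀ w ∈ M, (fun i n => w i (n + 1)) ∈ M)
    (w : Fin r → ℕ → k) (hw : ∀ p ∈ annih k M, pairL k p w = 0) : w ∈ M := by
  by_contra hwM
  obtain ⟨n, hn⟩ := exists_trunc k M hc w hwM
  let ρ : (Fin r → ℕ → k) →ₗ[k] (Fin r × Fin n → k) :=
    { toFun := fun w x => w x.1 x.2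
      map_add' := fun _ _ => rfl
      map_smul' := fun _ _ => rfl }
  have hρ : ρ w ∉ M.map ρ := by
    rintro ⟨m, hm, he⟩
    exact hn m hm fun i t ht => congrFun he (i, ⟨t, ht⟩)
  obtain ⟨f, hfw, hf⟩ := Submodule.exists_le_ker_of_notMem hρ
  let p : Fin r → Polynomial k := fun i =>
    ∑ t : Fin n, Polynomial.monomial (t : ℕ) (f (Pi.single (i, t) 1))
  have key : ∀ v : Fin r → ℕ → k, pairL k p v 0 = f (ρ v) := by
    intro v
    rw [f.pi_apply_eq_sum_univ (ρ v), Fintype.sum_prod_type, pairL_apply, Finset.sum_apply]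
    refine Finset.sum_congr rfl fun i _ => ?_
    simp only [p]
    rw [map_sum, LinearMap.sum_apply, Finset.sum_apply]
    refine Finset.sum_congr rfl fun t _ => ?_
    rw [act_monomial, zero_add, smul_eq_mul, mul_comm]
    congr 2
    funext x
    simp [Pi.single_apply, eq_comm]
  have hp0 : ∀ m ∈ M, pairL k p m 0 = 0 := fun m hm => by
    rw [key]; exact hf (Submodule.mem_map_of_mem hm)
  have hpt : ∀ t, ∀ m ∈ M, pairL k p m t = 0 := by
    intro t
    induction t with
    | zero => exact hp0
    | succ t ih =>
      intro m hm
      have := ih _ (hshift m hm)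
      rwa [pairL_shift] at this
  have hpN : p ∈ annih k M := fun m hm => funext fun t => hpt t m hm
  exact hfw (by rw [← key, hw p hpN]; rfl)

/-- The finite-dimensional part. -/
noncomputable def torsPart (k : Type*) [Field k] {n : ℕ} (a : Fin n → Polynomial k) :
    Submodule k (Fin n → ℕ → k) where
  carrier := {u | ∀ j, Polynomial.aeval (shiftEnd k) (a j) (u j) = 0}
  zero_mem' := fun j => by simp
  add_mem' := fun {u v} hu hv j => by rw [Pi.add_apply, map_add, hu j, hv j, add_zero]
  smul_mem' := fun c u hu j => by rw [Pi.smul_apply, map_smul, hu j, smul_zero]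

/-- Initial values. -/
noncomputable def torsInit (k : Type*) [Field k] {n : ℕ} (a : Fin n → Polynomial k) :
    torsPart k a →ₗ[k] (((j : Fin n) × Fin (a j).natDegree) → k) where
  toFun u x := (u : Fin n → ℕ → k) x.1 x.2
  map_add' _ _ := rfl
  map_smul' _ _ := rfl

lemma torsInit_injective (k : Type*) [Field k] {n : ℕ} (a : Fin n → Polynomial k)
    (ha : ∀ j, a j ≠ 0) : Function.Injective (torsInit k a) := by
  rw [injective_iff_map_eq_zero]
  intro u hu
  ext1
  funext j
  exact act_inj k (a j) (ha j) _ (u.2 j) fun t ht => congrFun hu ⟨j, ⟨t, ht⟩⟩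

lemma torsPart_discrete (k : Type*) [Field k] [TopologicalSpace k] [DiscreteTopology k]
    {n : ℕ} (a : Fin n → Polynomial k)
    (ha : ∀ j, a j ≠ 0) : DiscreteTopology (torsPart k a) := by
  refine DiscreteTopology.of_continuous_injective (f := torsInit k a) ?_
    (torsInit_injective k a ha)
  refine continuous_pi fun x => ?_
  exact (continuous_apply (x.2 : ℕ)).comp ((continuous_apply x.1).comp continuous_subtype_val)

lemma torsPart_shift (k : Type*) [Field k] {n : ℕ} (a : Fin n → Polynomial k)
    (u : Fin n → ℕ → k) (hu : u ∈ torsPart k a) : (fun i n => u i (n + 1)) ∈ torsPart k a := by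
  intro j
  rw [act_shift, hu j]; rfl

/-- The shift on the finite-dimensional part. -/
noncomputable def torsShift (k : Type*) [Field k] {n : ℕ} (a : Fin n → Polynomial k) :
    torsPart k a →ₗ[k] torsPart k a where
  toFun u := ⟨fun i m => u.1 i (m + 1), torsPart_shift k a u.1 u.2⟩
  map_add' _ _ := rfl
  map_smul' _ _ := rfl

/-- Inverse change of coordinates. -/
noncomputable def invL (k : Type*) [Field k] {r : ℕ} {ι : Type*} [Fintype ι]
    (b : Module.Basis ι (Polynomial k) (Fin r → Polynomial k)) (y : ι → ℕ → k) : Fin r → ℕ → k :=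
  fun i => ∑ s, Polynomial.aeval (shiftEnd k) (b.repr (Pi.single i 1) s) (y s)

lemma invL_pairL (k : Type*) [Field k] {r : ℕ} {ι : Type*} [Fintype ι]
    (b : Module.Basis ι (Polynomial k) (Fin r → Polynomial k)) (w : Fin r → ℕ → k) :
    invL k b (fun s => pairL k (b s) w) = w := by
  funext i
  simp only [invL, ← pairL_smul]
  rw [← pairL_sum, b.sum_repr, pairL_single]

lemma pairL_invL (k : Type*) [Field k] {r : ℕ} {ι : Type*} [Fintype ι]
    (b : Module.Basis ι (Polynomial k) (Fin r → Polynomial k)) (y : ι → ℕ → k) (t : ι) :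
    pairL k (b t) (invL k b y) = y t := by
  classical
  have h : ∀ s, ∑ i, b t i * b.repr (Pi.single i 1) s = if t = s then 1 else 0 := by
    intro s
    have h1 : b t = ∑ i, b t i • (Pi.single i 1 : Fin r → Polynomial k) := by
      exact pi_eq_sum_univ' (b t)
    have h2 := congrArg (fun v => b.repr v s) h1
    simp only [map_sum, map_smul, Finsupp.coe_finsetSum, Finset.sum_apply, Finsupp.smul_apply,
      smul_eq_mul, Module.Basis.repr_self, Finsupp.single_apply] at h2
    exact h2.symm
  rw [pairL_apply]
  simp only [invL, map_sum]
  rw [Finset.sum_comm]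
  have h3 : ∀ s, ∑ i, Polynomial.aeval (shiftEnd k) (b t i)
      (Polynomial.aeval (shiftEnd k) (b.repr (Pi.single i 1) s) (y s)) =
      if t = s then y s else 0 := by
    intro s
    have : ∀ i, Polynomial.aeval (shiftEnd k) (b t i)
      (Polynomial.aeval (shiftEnd k) (b.repr (Pi.single i 1) s) (y s)) =
      Polynomial.aeval (shiftEnd k) (b t i * b.repr (Pi.single i 1) s) (y s) := by
      intro i; rw [map_mul]; rfl
    simp only [this]
    rw [← LinearMap.sum_apply, ← map_sum, h]
    split_ifs <;> simp
  simp only [h3]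
  simp

lemma invL_continuous (k : Type*) [Field k] [TopologicalSpace k] [DiscreteTopology k]
    {r : ℕ} {ι : Type*} [Fintype ι]
    (b : Module.Basis ι (Polynomial k) (Fin r → Polynomial k)) : Continuous (invL k b) := by
  refine continuous_pi fun i => ?_
  exact continuous_finsetSum _ fun s _ => (act_continuous k _).comp (continuous_apply s)

lemma exists_sum_equiv (r n : ℕ) (f : Fin n ↪ Fin r) :
    ∃ ε : Fin (r - n) ⊕ Fin n ≃ Fin r, ∀ j, ε (Sum.inr j) = f j := by
  classical
  have hc : Fintype.card {x // x ∉ Set.range f} = r - n := by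
    rw [Fintype.card_subtype_compl]
    have : Fintype.card {x // x ∈ Set.range f} = n := by
      rw [← Fintype.card_congr (Equiv.ofInjective f f.injective), Fintype.card_fin]
    rw [this, Fintype.card_fin]
  let e1 : Fin (r - n) ≃ {x // x ∉ Set.range f} := (Fintype.equivFinOfCardEq hc).symm
  let e2 : Fin n ≃ {x // x ∈ Set.range f} := Equiv.ofInjective f f.injective
  exact ⟨((Equiv.sumComm _ _).trans (Equiv.sumCongr e2 e1)).trans
    (Equiv.sumCompl (fun x => x ∈ Set.range f)), fun j => rfl⟩

/-- Let `M ⊆ (k^ℕ)^{r₀}` be a 1-dimensional behavior: a closed,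
shift-invariant `k`-submodule (`k^ℕ` with the product topology, `k` discrete). Then
there are `r₁ ∈ ℕ` and a polynomial matrix `G ∈ M_{r₀×r₁}(k[z])` with
`M = ker(·G : (k^ℕ)^{r₀} → (k^ℕ)^{r₁})` (a kernel representation, i.e. an exact sequence
`0 → M → (k^ℕ)^{r₀} → (k^ℕ)^{r₁}`), and `M` is isomorphic as a topological `k[z]`-module
to `(k^ℕ)^{r₀ - r₁} ⊕ N` with `N` a finite-dimensional `k`-module: there is a
`k`-linear homeomorphism `e : M ≃ (k^ℕ)^{r₀-r₁} × k^d` intertwining the shift on `M`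
with the shift on the product factor and a `k`-linear endomorphism `T` on `k^d`. -/
theorem behavior_kernel_representation_and_structure
    (k : Type*) [Field k] [TopologicalSpace k] [DiscreteTopology k]
    (r₀ : ℕ) (M : Submodule k (Fin r₀ → ℕ → k))
    (hclosed : IsClosed (M : Set (Fin r₀ → ℕ → k)))
    (hshift : ∀ w ∈ M, (fun i n => w i (n + 1)) ∈ M) :
    ∃ (r₁ : ℕ) (G : Matrix (Fin r₀) (Fin r₁) (Polynomial k)),
      ((M : Set (Fin r₀ → ℕ → k)) =
        {w | ∀ j : Fin r₁, (∑ i, Polynomial.aeval (shiftEnd k) (G i j) (w i)) = 0}) ∧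
      ∃ (d : ℕ) (T : (Fin d → k) →ₗ[k] (Fin d → k))
        (e : M ≃ₗ[k] ((Fin (r₀ - r₁) → ℕ → k) × (Fin d → k))),
        Continuous e ∧ Continuous e.symm ∧
        ∀ w : M,
          e ⟨fun i n => (w : Fin r₀ → ℕ → k) i (n + 1), hshift w.1 w.2⟩
            = ((fun i n => (e w).1 i (n + 1)), T (e w).2) := by
  classical
  obtain ⟨n, S⟩ := Submodule.smithNormalForm (Pi.basisFun (Polynomial k) (Fin r₀)) (annih k M)
  obtain ⟨ε, hε⟩ := exists_sum_equiv r₀ n S.f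
  let b := S.bM.reindex ε.symm
  have hb : ∀ j, (S.bN j : Fin r₀ → Polynomial k) = S.a j • b (Sum.inr j) := by
    intro j
    rw [S.snf]; simp [b, hε]
  have ha : ∀ j, S.a j ≠ 0 := by
    intro j h0
    apply S.bN.ne_zero j
    ext1
    rw [hb, h0, zero_smul]; rfl
  have hM : ∀ w, w ∈ M ↔ ∀ j, pairL k (S.bN j : Fin r₀ → Polynomial k) w = 0 := by
    intro w
    refine ⟨fun hw j => (S.bN j).2 w hw, fun h => mem_of_annih k M hclosed hshift w ?_⟩
    intro p hp
    have h1 := S.bN.sum_repr ⟨p, hp⟩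
    have h2 := congrArg Subtype.val h1
    simp only [Submodule.coe_sum, Submodule.coe_smul] at h2
    rw [← h2, pairL_sum]
    exact Finset.sum_eq_zero fun j _ => by rw [pairL_smul, h j, map_zero]
  have hM' : ∀ w, w ∈ M ↔ (fun j => pairL k (b (Sum.inr j)) w) ∈ torsPart k S.a := by
    intro w
    rw [hM]
    refine forall_congr' fun j => ?_
    rw [hb, pairL_smul]
  refine ⟨n, fun i j => (S.bN j : Fin r₀ → Polynomial k) i, ?_, ?_⟩
  · ext w
    simp only [SetLike.mem_coe, Set.mem_ofPred_eq, hM, pairL_apply]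
  have : Module.Finite k (torsPart k S.a) :=
    Module.Finite.of_injective _ (torsInit_injective k S.a ha)
  have := torsPart_discrete k S.a ha
  let β : torsPart k S.a ≃ₗ[k] (Fin (Module.finrank k (torsPart k S.a)) → k) :=
    (Module.finBasis k (torsPart k S.a)).equivFun
  let e : M ≃ₗ[k] ((Fin (r₀ - n) → ℕ → k) × (Fin (Module.finrank k (torsPart k S.a)) → k)) :=
    { toFun := fun w => (fun s => pairL k (b (Sum.inl s)) w.1,
        β ⟨fun j => pairL k (b (Sum.inr j)) w.1, (hM' w.1).1 w.2⟩)
      map_add' := fun v w => by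
        refine Prod.ext ?_ ?_
        · funext s; exact map_add (pairL k (b (Sum.inl s))) v.1 w.1
        · change β _ = β _ + β _
          rw [← map_add]
          congr 1; ext1; funext j
          exact map_add (pairL k (b (Sum.inr j))) v.1 w.1
      map_smul' := fun c w => by
        refine Prod.ext ?_ ?_
        · funext s; exact map_smul (pairL k (b (Sum.inl s))) c w.1
        · change β _ = c • β _
          rw [← map_smul]
          congr 1; ext1; funext j
          exact map_smul (pairL k (b (Sum.inr j))) c w.1
      invFun := fun x => ⟨invL k b (Sum.elim x.1 (β.symm x.2).1), by
        rw [hM']; simp only [pairL_invL, Sum.elim_inr]; exact (β.symm x.2).2⟩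
      left_inv := fun w => by
        ext1
        conv_rhs => rw [← invL_pairL k b w.1]
        simp only [LinearEquiv.symm_apply_apply]
        congr 1
        funext s
        cases s <;> rfl
      right_inv := fun x => by
        simp only [pairL_invL, Sum.elim_inr, Sum.elim_inl]
        exact Prod.ext rfl (β.apply_symm_apply x.2) }
  refine ⟨_, β.toLinearMap ∘ₗ torsShift k S.a ∘ₗ β.symm.toLinearMap, e, ?_, ?_, ?_⟩
  · refine Continuous.prodMk ?_ ?_
    · exact continuous_pi fun s => (pairL_continuous k _).comp continuous_subtype_val
    · refine (continuous_of_discreteTopology (f := β)).comp ?_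
      refine Continuous.subtype_mk ?_ _
      exact continuous_pi fun s => (pairL_continuous k _).comp continuous_subtype_val
  · refine Continuous.subtype_mk ?_ _
    refine (invL_continuous k b).comp ?_
    refine continuous_pi fun s => ?_
    cases s with
    | inl s => exact (continuous_apply s).comp continuous_fst
    | inr j =>
      exact (continuous_apply j).comp (continuous_subtype_val.comp
        ((continuous_of_discreteTopology (f := β.symm)).comp continuous_snd))
  · intro w
    refine Prod.ext ?_ ?_
    · funext s; exact pairL_shift k _ w.1
    · change β _ = β (torsShift k S.a (β.symm (β _)))
      rw [LinearEquiv.symm_apply_apply]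
      congr 1; ext1; funext j
      exact pairL_shift k _ w.1
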